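/- Let Ψ be a critical branching mechanism and let (ν_t)_{t>0} be a weakly measurable family of nonzero finite Borel measures on (0,∞). Define φ(t,q) = ∫_{(0,∞)} (1 − e^{−qx}) ν_t(dx). Then (ν_t)_{t>0} is a weak solution of the generalized Smoluchowski equation if and only if ∂_t φ(t,q) = −Ψ(φ(t,q)) for all t > 0 and all q ∈ (0,∞). -/

import Mathlib

open MeasureTheory Set Filter

noncomputable section

/-- A test function: continuous on `(0,∞)`, bounded there, with finite limits
at `0⁺` and at `∞`. -/
def IsTestFun (f : ℝ → ℝ) : Prop :=
  ContinuousOn f (Ioi 0) ∧ (∃ M : ℝ, ∀ x ∈ Ioi (0:ℝ), |f x| ≤ M) ∧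
    (∃ l₀ : ℝ, Tendsto f (nhdsWithin 0 (Ioi 0)) (nhds l₀)) ∧
    (∃ linf : ℝ, Tendsto f atTop (nhds linf))

/-- `I_k(ν,f) = m^{-k} ∫_{(0,∞)^k} [f(x₁+⋯+x_k) - Σᵢ f(xᵢ)] ν(dx₁)⋯ν(dx_k)`,
where `m = ν((0,∞))`. -/
noncomputable def Ik (k : ℕ) (ν : Measure ℝ) (f : ℝ → ℝ) : ℝ :=
  (∫ x : Fin k → ℝ, (f (∑ i, x i) - ∑ i, f (x i))
      ∂(Measure.pi fun _ : Fin k => ν.restrict (Ioi 0))) /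
    ((ν (Ioi 0)).toReal) ^ k

/-- `⟨L(ν), f⟩ = Σ_{k≥2} ((-m)^k Ψ⁽ᵏ⁾(m)/k!) I_k(ν,f)` with `m = ν((0,∞))`. -/
noncomputable def Lform (Ψ : ℝ → ℝ) (ν : Measure ℝ) (f : ℝ → ℝ) : ℝ :=
  ∑' k : ℕ,
    ((-((ν (Ioi 0)).toReal)) ^ (k + 2) * iteratedDeriv (k + 2) Ψ ((ν (Ioi 0)).toReal) /
        ((k + 2).factorial : ℝ)) * Ik (k + 2) ν f

/-- Weak solution of the generalized Smoluchowski equation. -/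
def IsWeakSolution (Ψ : ℝ → ℝ) (ν : ℝ → Measure ℝ) : Prop :=
  ∀ f : ℝ → ℝ, IsTestFun f → ∀ s t : ℝ, 0 < s → 0 < t →
    ∫ x in Ioi (0:ℝ), f x ∂(ν t)
      = (∫ x in Ioi (0:ℝ), f x ∂(ν s)) + ∫ τ in s..t, Lform Ψ (ν τ) f

open MeasureTheory Set Filter

/-- weight -/
noncomputable def PiFin (π : Measure ℝ) : Prop :=
  ∫⁻ x in Ioi (0:ℝ), ENNReal.ofReal (min x (x ^ 2)) ∂π < ⊤

lemma w_integrable {π : Measure ℝ} (h : PiFin π) :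
    Integrable (fun x : ℝ => min x (x^2)) (π.restrict (Ioi 0)) := by
  refine ⟨(by fun_prop : Continuous fun x : ℝ => min x (x^2)).aestronglyMeasurable, ?_⟩
  rw [hasFiniteIntegral_iff_ofReal]
  · exact h
  · filter_upwards [ae_restrict_mem measurableSet_Ioi] with x hx
    have : (0:ℝ) < x := hx
    simp only [Pi.zero_apply]
    positivity

lemma int_of_bound {π : Measure ℝ} (h : PiFin π) {g : ℝ → ℝ} (hg : Continuous g) (C : ℝ)
    (hb : ∀ x : ℝ, 0 < x → |g x| ≤ C * min x (x^2)) :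
    Integrable g (π.restrict (Ioi 0)) := by
  refine ((w_integrable h).const_mul C).mono' hg.aestronglyMeasurable ?_
  filter_upwards [ae_restrict_mem measurableSet_Ioi] with x hx
  exact hb x hx

lemma le_w {a b C x : ℝ} (hx : 0 < x) (h1 : a ≤ b * x) (h2 : a ≤ C * x^2) (hb : 0 ≤ b) (hC : 0 ≤ C) :
    a ≤ (b + C) * min x (x^2) := by
  rcases min_choice x (x^2) with h | h <;> rw [h] <;> nlinarith [sq_nonneg x, mul_nonneg hC hx.le, mul_nonneg hb (sq_nonneg x)]

lemma g0_nonneg (y : ℝ) : 0 ≤ Real.exp (-y) - 1 + y := by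
  have := Real.add_one_le_exp (-y); linarith

lemma g0_le (y : ℝ) (hy : 0 ≤ y) : Real.exp (-y) - 1 + y ≤ y := by
  have : Real.exp (-y) ≤ 1 := Real.exp_le_one_iff.2 (by linarith)
  linarith

lemma g0_le_sq (y : ℝ) (hy : 0 ≤ y) : Real.exp (-y) - 1 + y ≤ y^2 := by
  have h1 := Real.add_one_le_exp y
  have h2 : Real.exp (-y) * Real.exp y = 1 := by rw [← Real.exp_add]; simp
  have h3 := Real.exp_pos (-y)
  nlinarith [pow_nonneg hy 3, mul_le_mul_of_nonneg_left h1 h3.le,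
    mul_nonneg hy (g0_nonneg y), sq_nonneg y]

lemma g0_bound {u x : ℝ} (hu : 0 < u) (hx : 0 < x) :
    |Real.exp (-(u * x)) - 1 + u * x| ≤ (u + u^2) * min x (x^2) := by
  rw [abs_of_nonneg (g0_nonneg _)]
  have := mul_pos hu hx
  refine le_w hx (g0_le _ this.le) ?_ hu.le (sq_nonneg u)
  have := g0_le_sq _ this.le
  linarith [mul_pow u x 2]

lemma g1_nonneg {u x : ℝ} (hu : 0 < u) (hx : 0 < x) : 0 ≤ x * (1 - Real.exp (-(u * x))) := by
  have := mul_pos hu hx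
  have : Real.exp (-(u*x)) ≤ 1 := Real.exp_le_one_iff.2 (by linarith)
  exact mul_nonneg hx.le (by linarith)

lemma g1_bound {u x : ℝ} (hu : 0 < u) (hx : 0 < x) :
    |x * (1 - Real.exp (-(u * x)))| ≤ (1 + u) * min x (x^2) := by
  rw [abs_of_nonneg (g1_nonneg hu hx)]
  refine le_w hx ?_ ?_ zero_le_one hu.le
  · nlinarith [Real.exp_pos (-(u * x))]
  · have := g0_nonneg (u * x)
    nlinarith

lemma gn_bound (n : ℕ) {c : ℝ} (hc : 0 < c) : ∃ C : ℝ, ∀ u : ℝ, c ≤ u → ∀ x : ℝ, 0 < x →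
    |x^(n+2) * Real.exp (-(u * x))| ≤ C * min x (x^2) := by
  refine ⟨(n+1).factorial / c^(n+1) + n.factorial / c^n, fun u hu x hx => ?_⟩
  have key : ∀ j : ℕ, x^j * Real.exp (-(u*x)) ≤ j.factorial / c^j := by
    intro j
    have h1 := Real.pow_div_factorial_le_exp (c * x) (by positivity) j
    have h2 : Real.exp (-(u*x)) ≤ Real.exp (-(c*x)) := Real.exp_le_exp.2 (by nlinarith)
    have h3 : Real.exp (c*x) * Real.exp (-(c*x)) = 1 := by rw [← Real.exp_add]; simp
    have hf : (0:ℝ) < j.factorial := by positivity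
    rw [div_le_iff₀ hf, mul_pow] at h1
    rw [le_div_iff₀ (by positivity)]
    calc x^j * Real.exp (-(u*x)) * c^j ≤ (c^j * x^j) * Real.exp (-(c*x)) := by
          nlinarith [mul_le_mul_of_nonneg_left h2 (by positivity : 0 ≤ c^j * x^j)]
      _ ≤ (Real.exp (c*x) * j.factorial) * Real.exp (-(c*x)) := by gcongr
      _ = j.factorial := by rw [mul_right_comm, h3, one_mul]
  rw [abs_of_nonneg (by positivity)]
  refine le_w hx ?_ ?_ (by positivity) (by positivity)
  · have := mul_le_mul_of_nonneg_right (key (n+1)) hx.le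
    calc _ = x^(n+1) * Real.exp (-(u*x)) * x := by ring
      _ ≤ _ := this
  · have := mul_le_mul_of_nonneg_right (key n) (sq_nonneg x)
    calc _ = x^n * Real.exp (-(u*x)) * x^2 := by ring
      _ ≤ _ := this

lemma deriv_lem {π : Measure ℝ} (h : PiFin π) (g g' : ℝ → ℝ → ℝ) (u : ℝ) (hu : 0 < u)
    (hg : ∀ v, Continuous (g v)) (hg' : ∀ v, Continuous (g' v))
    (hi : Integrable (g u) (π.restrict (Ioi 0)))
    (C : ℝ) (hb : ∀ v, u/2 ≤ v → v ≤ 2*u → ∀ x, 0 < x → |g' v x| ≤ C * min x (x^2))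
    (hd : ∀ v x, HasDerivAt (fun v => g v x) (g' v x) v) :
    HasDerivAt (fun v => ∫ x in Ioi (0:ℝ), g v x ∂π) (∫ x in Ioi (0:ℝ), g' u x ∂π) u := by
  refine (hasDerivAt_integral_of_dominated_loc_of_deriv_le (bound := fun x => C * min x (x^2))
    (s := Icc (u/2) (2*u)) (Icc_mem_nhds (by linarith) (by linarith))
    (Eventually.of_forall fun v => (hg v).aestronglyMeasurable) hi (hg' u).aestronglyMeasurable
    ?_ ((w_integrable h).const_mul C) ?_).2
  · filter_upwards [ae_restrict_mem measurableSet_Ioi] with x hx v hv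
    exact hb v hv.1 hv.2 x hx
  · exact Eventually.of_forall fun x v _ => hd v x

noncomputable def G (π : Measure ℝ) (n : ℕ) (u : ℝ) : ℝ := ∫ x in Ioi (0:ℝ), x^n * Real.exp (-(u*x)) ∂π

lemma hexp (v x : ℝ) : HasDerivAt (fun v => Real.exp (-(v*x))) (-(x * Real.exp (-(v*x)))) v := by
  have h1 : HasDerivAt (fun v : ℝ => -(v*x)) (-x) v := by
    exact ((hasDerivAt_id' v).mul_const x).neg.congr_deriv (by ring)
  refine h1.exp.congr_deriv ?_
  ring

lemma G0_deriv {π : Measure ℝ} (h : PiFin π) {u : ℝ} (hu : 0 < u) :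
    HasDerivAt (fun v => ∫ x in Ioi (0:ℝ), (Real.exp (-(v * x)) - 1 + v * x) ∂π)
      (∫ x in Ioi (0:ℝ), x * (1 - Real.exp (-(u * x))) ∂π) u := by
  refine deriv_lem h (fun v x => Real.exp (-(v * x)) - 1 + v * x)
    (fun v x => x * (1 - Real.exp (-(v * x)))) u hu (by intro v; fun_prop) (by intro v; fun_prop)
    (int_of_bound h (by fun_prop) (u+u^2) fun x hx => g0_bound hu hx) (1 + 2*u) ?_ ?_
  · intro v h1 h2 x hx
    refine (g1_bound (by linarith) hx).trans ?_
    gcongr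
  · intro v x
    refine (((hexp v x).sub_const 1).add ((hasDerivAt_id' v).mul_const x)).congr_deriv ?_
    ring

lemma G1_deriv {π : Measure ℝ} (h : PiFin π) {u : ℝ} (hu : 0 < u) :
    HasDerivAt (fun v => ∫ x in Ioi (0:ℝ), x * (1 - Real.exp (-(v * x))) ∂π) (G π 2 u) u := by
  obtain ⟨C, hC⟩ := gn_bound 0 (half_pos hu)
  refine deriv_lem h (fun v x => x * (1 - Real.exp (-(v * x))))
    (fun v x => x^2 * Real.exp (-(v * x))) u hu (by intro v; fun_prop) (by intro v; fun_prop)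
    (int_of_bound h (by fun_prop) (1+u) fun x hx => g1_bound hu hx) C ?_ ?_
  · intro v h1 h2 x hx
    exact hC v h1 x hx
  · intro v x
    refine (((hexp v x).const_sub 1).const_mul x).congr_deriv ?_
    ring

lemma gn_int {π : Measure ℝ} (h : PiFin π) (n : ℕ) {u : ℝ} (hu : 0 < u) :
    Integrable (fun x => x^(n+2) * Real.exp (-(u * x))) (π.restrict (Ioi 0)) := by
  obtain ⟨C, hC⟩ := gn_bound n hu
  exact int_of_bound h (by fun_prop) C (hC u le_rfl)

lemma Gn_deriv {π : Measure ℝ} (h : PiFin π) (n : ℕ) {u : ℝ} (hu : 0 < u) :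
    HasDerivAt (G π (n+2)) (-G π (n+3) u) u := by
  obtain ⟨C, hC⟩ := gn_bound (n+1) (half_pos hu)
  unfold G
  rw [← integral_neg]
  refine deriv_lem h (fun v x => x^(n+2) * Real.exp (-(v * x)))
    (fun v x => -(x^(n+3) * Real.exp (-(v * x)))) u hu (by intro v; fun_prop)
    (by intro v; fun_prop) (gn_int h n hu) C ?_ ?_
  · intro v h1 h2 x hx
    rw [abs_neg]
    exact hC v h1 x hx
  · intro v x
    refine ((hexp v x).const_mul (x^(n+2))).congr_deriv ?_
    ring

/-- branching mechanism data -/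
noncomputable def BM (Ψ : ℝ → ℝ) (β : ℝ) (π : Measure ℝ) : Prop :=
  0 ≤ β ∧ PiFin π ∧ ∀ u : ℝ, 0 < u →
      Ψ u = β * u ^ 2 + ∫ x in Ioi (0:ℝ), (Real.exp (-(u * x)) - 1 + u * x) ∂π

lemma Psi_deriv {Ψ : ℝ → ℝ} {β : ℝ} {π : Measure ℝ} (h : BM Ψ β π) {u : ℝ} (hu : 0 < u) :
    HasDerivAt Ψ (2 * β * u + ∫ x in Ioi (0:ℝ), x * (1 - Real.exp (-(u * x))) ∂π) u := by
  have := ((hasDerivAt_pow 2 u).const_mul β).add (G0_deriv h.2.1 hu)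
  refine (this.congr_of_eventuallyEq ?_).congr_deriv ?_
  · filter_upwards [Ioi_mem_nhds hu] with v hv
    exact h.2.2 v hv
  · simp; ring

lemma Psi_iter {Ψ : ℝ → ℝ} {β : ℝ} {π : Measure ℝ} (h : BM Ψ β π) (n : ℕ) :
    ∀ u : ℝ, 0 < u → iteratedDeriv (n+2) Ψ u
      = (if n = 0 then 2 * β else 0) + (-1)^n * G π (n+2) u := by
  induction n with
  | zero =>
    intro u hu
    rw [iteratedDeriv_succ, iteratedDeriv_one]
    have h1 : deriv Ψ =ᶠ[nhds u] fun u => 2 * β * u + ∫ x in Ioi (0:ℝ), x * (1 - Real.exp (-(u * x))) ∂π := by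
      filter_upwards [Ioi_mem_nhds hu] with v hv
      exact (Psi_deriv h hv).deriv
    rw [h1.deriv_eq]
    refine HasDerivAt.deriv ?_
    refine (((hasDerivAt_id' u).const_mul (2*β)).add (G1_deriv h.2.1 hu)).congr_deriv ?_
    simp
  | succ n ih =>
    intro u hu
    rw [iteratedDeriv_succ]
    have h1 : iteratedDeriv (n+2) Ψ =ᶠ[nhds u] fun u => (if n = 0 then 2 * β else 0) + (-1)^n * G π (n+2) u := by
      filter_upwards [Ioi_mem_nhds hu] with v hv
      exact ih v hv
    rw [h1.deriv_eq, (((Gn_deriv h.2.1 n hu).const_mul ((-1)^n)).const_add _).deriv]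
    simp; ring

lemma Psi_nonneg {Ψ : ℝ → ℝ} {β : ℝ} {π : Measure ℝ} (h : BM Ψ β π) {u : ℝ} (hu : 0 < u) :
    0 ≤ Ψ u := by
  rw [h.2.2 u hu]
  have := h.1
  have : 0 ≤ ∫ x in Ioi (0:ℝ), (Real.exp (-(u * x)) - 1 + u * x) ∂π :=
    integral_nonneg fun x => g0_nonneg _
  positivity

lemma Psi_mono {Ψ : ℝ → ℝ} {β : ℝ} {π : Measure ℝ} (h : BM Ψ β π) {u v : ℝ} (hu : 0 < u)
    (huv : u ≤ v) : Ψ u ≤ Ψ v := by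
  have hm : MonotoneOn Ψ (Ioi 0) := by
    refine monotoneOn_of_deriv_nonneg (convex_Ioi 0)
      (fun x hx => (Psi_deriv h hx).continuousAt.continuousWithinAt) ?_ ?_
    · rw [interior_Ioi]
      exact fun x hx => (Psi_deriv h hx).differentiableAt.differentiableWithinAt
    · rw [interior_Ioi]
      intro x hx
      rw [(Psi_deriv h hx).deriv]
      have := h.1
      have hx' : 0 < x := hx
      have : 0 ≤ ∫ y in Ioi (0:ℝ), y * (1 - Real.exp (-(x * y))) ∂π :=
        setIntegral_nonneg measurableSet_Ioi fun y hy => g1_nonneg hx hy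
      positivity
  exact hm hu (lt_of_lt_of_le hu huv) huv

/-- coefficients -/
noncomputable def ak (Ψ : ℝ → ℝ) (m : ℝ) (k : ℕ) : ℝ :=
  (-m)^(k+2) * iteratedDeriv (k+2) Ψ m / ((k+2).factorial : ℝ)

lemma ak_eq {Ψ : ℝ → ℝ} {β : ℝ} {π : Measure ℝ} (h : BM Ψ β π) {m : ℝ} (hm : 0 < m) (k : ℕ) :
    ak Ψ m k = (if k = 0 then β * m^2 else 0) +
      ∫ x in Ioi (0:ℝ), (m*x)^(k+2) / ((k+2).factorial : ℝ) * Real.exp (-(m*x)) ∂π := by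
  have e : ∀ x : ℝ, (m*x)^(k+2) / ((k+2).factorial : ℝ) * Real.exp (-(m*x)) =
    (m^(k+2) / ((k+2).factorial : ℝ)) * (x^(k+2) * Real.exp (-(m*x))) := by
    intro x; ring
  simp_rw [e]
  rw [integral_const_mul, ak, Psi_iter h k m hm, G]
  have e2 : (-m)^(k+2) = (-1)^k * m^(k+2) := by rw [neg_pow]; ring
  have e3 : ((-1:ℝ)^k) * (-1)^k = 1 := by rw [← mul_pow]; simp
  rw [e2]
  split_ifs with hk
  · subst hk; simp; ring
  · linear_combination (m^(k+2) / ((k+2).factorial : ℝ)) * (∫ x in Ioi (0:ℝ), x^(k+2) * Real.exp (-(m*x)) ∂π) * e3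

lemma ak_nonneg {Ψ : ℝ → ℝ} {β : ℝ} {π : Measure ℝ} (h : BM Ψ β π) {m : ℝ} (hm : 0 < m) (k : ℕ) :
    0 ≤ ak Ψ m k := by
  rw [ak_eq h hm]
  have := h.1
  refine add_nonneg (by split_ifs <;> positivity) (setIntegral_nonneg measurableSet_Ioi fun x hx => ?_)
  have hx' : 0 < x := hx
  positivity

lemma hasSum_shift2 {f : ℕ → ℝ} {a : ℝ} (h : HasSum f a) (h0 : f 0 = 0) (h1 : f 1 = 0) :
    HasSum (fun k => f (k+2)) a := by
  rw [hasSum_nat_add_iff]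
  simpa [Finset.sum_range_succ, h0, h1] using h

lemma hs_congr {f g : ℕ → ℝ} {a b : ℝ} (h : HasSum f a) (hf : ∀ k, g k = f k) (hb : b = a) :
    HasSum g b := by
  rw [hb]; exact (funext hf : g = f) ▸ h

lemma exp_hasSum (y : ℝ) : HasSum (fun k : ℕ => y^k / (k.factorial : ℝ)) (Real.exp y) := by
  rw [Real.exp_eq_exp_ℝ]; exact NormedSpace.expSeries_div_hasSum_exp y

lemma kexp_hasSum (y : ℝ) : HasSum (fun k : ℕ => (k:ℝ) * (y^k / (k.factorial : ℝ))) (y * Real.exp y) := by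
  rw [← hasSum_nat_add_iff' 1]
  simp only [Finset.sum_range_one, Nat.cast_zero, zero_mul, sub_zero]
  refine ((exp_hasSum y).mul_left y).congr_fun ?_ |> id
  intro k
  rw [Nat.factorial_succ]
  push_cast
  field_simp
  ring

lemma bound_pt (y : ℝ) : HasSum (fun k : ℕ => ((k:ℝ)+2) * (y^(k+2) / ((k+2).factorial : ℝ) * Real.exp (-y)))
    (y * (1 - Real.exp (-y))) := by
  have h1 : HasSum (fun k : ℕ => (k:ℝ) * (y^k / (k.factorial : ℝ)) - if k = 1 then y else 0)
      (y * Real.exp y - y) := by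
    refine (kexp_hasSum y).sub ?_
    exact hasSum_ite_eq 1 y
  have h2 := (hasSum_shift2 h1 (by simp) (by simp)).mul_right (Real.exp (-y))
  refine hs_congr h2 ?_ ?_
  · intro k; simp; ring
  · have h3 : Real.exp y * Real.exp (-y) = 1 := by rw [← Real.exp_add]; simp
    linear_combination (-y) * h3

lemma c_pt (m φ x : ℝ) (hm : 0 < m) : HasSum (fun k : ℕ => (m*x)^(k+2) / ((k+2).factorial : ℝ) * Real.exp (-(m*x))
      * (1 - (1 - φ/m)^(k+2) - ((k+2 : ℕ):ℝ) * (φ/m)))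
    (-(Real.exp (-(φ*x)) - 1 + φ * x)) := by
  have h1 := ((exp_hasSum (m*x)).sub (exp_hasSum ((m*x)*(1-φ/m)))).sub ((kexp_hasSum (m*x)).mul_right (φ/m))
  have h2 := (hasSum_shift2 h1 (by simp) (by simp; ring)).mul_right (Real.exp (-(m*x)))
  refine hs_congr h2 ?_ ?_
  · intro k
    rw [mul_pow (m*x) (1-φ/m)]
    ring
  · have h3 : Real.exp (m*x) * Real.exp (-(m*x)) = 1 := by rw [← Real.exp_add]; simp
    have h4 : Real.exp (m*x*(1-φ/m)) * Real.exp (-(m*x)) = Real.exp (-(φ*x)) := by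
      rw [← Real.exp_add]; congr 1; field_simp; ring
    have h5 : m * x * (φ/m) = φ * x := by field_simp
    linear_combination -h3 + h4 + m*x*(φ/m) * h3 + h5

lemma c_abs (k : ℕ) {r : ℝ} (h0 : 0 ≤ r) (h1 : r ≤ 1) :
    |1 - (1 - r)^(k+2) - ((k+2 : ℕ):ℝ) * r| ≤ (k:ℝ)+2 := by
  have a : (0:ℝ) ≤ (1-r)^(k+2) := pow_nonneg (by linarith) _
  have b : (1-r)^(k+2) ≤ 1 := pow_le_one₀ (by linarith) (by linarith)
  push_cast
  rw [abs_le]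
  have c := one_add_mul_le_pow (by linarith : -2 ≤ -r) (k+2)
  push_cast at c
  have d : (1 + -r) = 1 - r := by ring
  rw [d] at c
  have hk : (0:ℝ) ≤ k := by positivity
  constructor <;> nlinarith

lemma mg1_int {π : Measure ℝ} (h : PiFin π) {m : ℝ} (hm : 0 < m) :
    Integrable (fun x => (m * x) * (1 - Real.exp (-(m*x)))) (π.restrict (Ioi 0)) := by
  have := (int_of_bound h (g := fun x => x * (1 - Real.exp (-(m*x)))) (by fun_prop) (1+m)
    fun x hx => g1_bound hm hx).const_mul m
  simpa [mul_assoc] using this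

lemma gen_sum {π : Measure ℝ} (h : PiFin π) {m : ℝ} (hm : 0 < m) (c : ℕ → ℝ)
    (hc : ∀ k, |c k| ≤ (k:ℝ) + 2) (S : ℝ → ℝ)
    (hS : ∀ x, HasSum (fun k : ℕ => (m*x)^(k+2) / ((k+2).factorial : ℝ) * Real.exp (-(m*x)) * c k) (S x)) :
    HasSum (fun k => (∫ x in Ioi (0:ℝ), (m*x)^(k+2) / ((k+2).factorial : ℝ) * Real.exp (-(m*x)) ∂π) * c k)
      (∫ x in Ioi (0:ℝ), S x ∂π) := by
  simp_rw [← integral_mul_const]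
  refine hasSum_integral_of_dominated_convergence
    (fun (k : ℕ) x => ((k:ℝ)+2) * ((m*x)^(k+2) / ((k+2).factorial : ℝ) * Real.exp (-(m*x))))
    (fun k => (by fun_prop : Continuous _).aestronglyMeasurable) ?_ ?_ ?_ ?_
  · intro k
    filter_upwards [ae_restrict_mem measurableSet_Ioi] with x hx
    have hx' : 0 < x := hx
    rw [norm_mul, mul_comm, Real.norm_eq_abs, Real.norm_eq_abs, abs_of_nonneg (by positivity : 0 ≤ (m*x)^(k+2) / ((k+2).factorial : ℝ) * Real.exp (-(m*x)))]
    gcongr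
    exact hc k
  · exact Eventually.of_forall fun x => (bound_pt (m*x)).summable
  · have : (fun x => ∑' k : ℕ, ((k:ℝ)+2) * ((m*x)^(k+2) / ((k+2).factorial : ℝ) * Real.exp (-(m*x)))) = fun x => (m * x) * (1 - Real.exp (-(m*x))) := by
      ext x; exact (bound_pt (m*x)).tsum_eq
    rw [this]
    exact mg1_int h hm
  · exact Eventually.of_forall fun x => hS x

noncomputable def Bm (β : ℝ) (π : Measure ℝ) (m : ℝ) : ℝ :=
  2 * β * m^2 + ∫ x in Ioi (0:ℝ), (m * x) * (1 - Real.exp (-(m*x))) ∂π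

lemma Bm_mono {β : ℝ} {π : Measure ℝ} (hβ : 0 ≤ β) (h : PiFin π) {m M : ℝ} (hm : 0 < m) (hM : m ≤ M) :
    Bm β π m ≤ Bm β π M := by
  have hM0 : 0 < M := lt_of_lt_of_le hm hM
  unfold Bm
  refine add_le_add (by gcongr) ?_
  refine setIntegral_mono_on (mg1_int h hm) (mg1_int h hM0) measurableSet_Ioi ?_
  intro x hx
  have hx' : 0 < x := hx
  have h1 : m * x ≤ M * x := by gcongr
  have h2 : Real.exp (-(M*x)) ≤ Real.exp (-(m*x)) := Real.exp_le_exp.2 (by linarith)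
  have h3 : Real.exp (-(m*x)) ≤ 1 := Real.exp_le_one_iff.2 (by nlinarith)
  gcongr

lemma ak_sum {Ψ : ℝ → ℝ} {β : ℝ} {π : Measure ℝ} (h : BM Ψ β π) {m : ℝ} (hm : 0 < m) :
    HasSum (fun k : ℕ => ak Ψ m k * ((k:ℝ)+2)) (Bm β π m) := by
  have h1 := gen_sum h.2.1 hm (fun k => (k:ℝ)+2) (fun k => by rw [abs_of_nonneg (by positivity)])
    (fun x => m * x * (1 - Real.exp (-(m*x)))) (fun x => by
      convert bound_pt (m*x) using 2; ring)
  have h2 := (hasSum_ite_eq (0:ℕ) (2 * β * m^2)).add h1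
  refine h2.congr_fun ?_ |> id
  intro k
  rw [ak_eq h hm]
  split_ifs with hk
  · subst hk; simp; ring
  · ring

lemma ak_c_sum {Ψ : ℝ → ℝ} {β : ℝ} {π : Measure ℝ} (h : BM Ψ β π) {m φ : ℝ} (hm : 0 < m)
    (hφ : 0 < φ) (hφm : φ ≤ m) :
    HasSum (fun k : ℕ => ak Ψ m k * (1 - (1 - φ/m)^(k+2) - ((k+2 : ℕ):ℝ) * (φ/m))) (-Ψ φ) := by
  have h1 := gen_sum h.2.1 hm (fun k => (1 - (1 - φ/m)^(k+2) - ((k+2 : ℕ):ℝ) * (φ/m)))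
    (fun k => c_abs k (by positivity) (by rw [div_le_one hm]; exact hφm))
    _ (fun x => c_pt m φ x hm)
  have h2 := (hasSum_ite_eq (0:ℕ) (-(β * φ^2))).add h1
  rw [integral_neg, ← neg_add, ← h.2.2 φ hφ] at h2
  refine h2.congr_fun ?_ |> id
  intro k
  rw [ak_eq h hm]
  split_ifs with hk
  · subst hk; simp; field_simp; ring
  · ring
def Nice (f : ℝ → ℝ) : Prop := Continuous f ∧ ∃ M : ℝ, ∀ x : ℝ, 0 < x → |f x| ≤ M

/-- mass -/
def mass (μ : Measure ℝ) : ℝ := (μ (Ioi 0)).toReal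

def phi (μ : Measure ℝ) (q : ℝ) : ℝ := ∫ x in Ioi (0:ℝ), (1 - Real.exp (-(q * x))) ∂μ

lemma mass_pos (μ : Measure ℝ) [IsFiniteMeasure μ] (h0 : μ (Ioi 0) ≠ 0) : 0 < mass μ :=
  ENNReal.toReal_pos h0 (measure_ne_top _ _)

lemma pi_pos (k : ℕ) (μ : Measure ℝ) [IsFiniteMeasure μ] :
    ∀ᵐ x ∂(Measure.pi fun _ : Fin k => μ.restrict (Ioi 0)), ∀ i, 0 < x i := by
  rw [ae_all_iff]
  intro i
  have h : ∀ᵐ y ∂(μ.restrict (Ioi 0)), 0 < y := ae_restrict_mem measurableSet_Ioi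
  exact (Measure.tendsto_eval_ae_ae (μ := fun _ : Fin k => μ.restrict (Ioi 0)) (i := i)).eventually h

lemma sum_bound (k : ℕ) {f : ℝ → ℝ} {M : ℝ} (hM : ∀ x : ℝ, 0 < x → |f x| ≤ M) (x : Fin (k+1) → ℝ)
    (hx : ∀ i, 0 < x i) : |f (∑ i, x i) - ∑ i, f (x i)| ≤ ((k:ℝ)+2) * M := by
  have h1 := hM _ (Finset.sum_pos (fun i _ => hx i) Finset.univ_nonempty)
  have h2 : |∑ i, f (x i)| ≤ ∑ i : Fin (k+1), M :=
    (Finset.abs_sum_le_sum_abs _ _).trans (Finset.sum_le_sum fun i _ => hM _ (hx i))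
  simp at h2
  have := abs_sub (f (∑ i, x i)) (∑ i, f (x i))
  linarith

lemma nice_int (k : ℕ) (μ : Measure ℝ) [IsFiniteMeasure μ] {f : ℝ → ℝ} (hf : Nice f) :
    Integrable (fun x : Fin (k+1) → ℝ => f (∑ i, x i) - ∑ i, f (x i))
      (Measure.pi fun _ : Fin (k+1) => μ.restrict (Ioi 0)) := by
  obtain ⟨hc, M, hM⟩ := hf
  refine Integrable.of_bound (by fun_prop : Continuous _).aestronglyMeasurable (((k:ℝ)+2)*M) ?_
  filter_upwards [pi_pos (k+1) μ] with x hx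
  exact sum_bound k hM x hx

lemma pi_mass (k : ℕ) (μ : Measure ℝ) [IsFiniteMeasure μ] :
    (Measure.pi fun _ : Fin k => μ.restrict (Ioi 0)).real univ = mass μ ^ k := by
  simp [Measure.real, Measure.pi_univ, mass]

lemma Ik_bound (k : ℕ) (μ : Measure ℝ) [IsFiniteMeasure μ] (h0 : μ (Ioi 0) ≠ 0) {f : ℝ → ℝ} {M : ℝ}
    (hM : ∀ x : ℝ, 0 < x → |f x| ≤ M) : |Ik (k+2) μ f| ≤ ((k:ℝ)+3) * M := by
  have h1 : ‖∫ x : Fin (k+2) → ℝ, (f (∑ i, x i) - ∑ i, f (x i))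
      ∂(Measure.pi fun _ : Fin (k+2) => μ.restrict (Ioi 0))‖ ≤ ((k:ℝ)+3) * M * _ :=
    norm_integral_le_of_norm_le_const (by
      filter_upwards [pi_pos (k+2) μ] with x hx
      refine (sum_bound (k+1) hM x hx).trans (le_of_eq ?_)
      push_cast; ring)
  rw [pi_mass] at h1
  have : 0 < (μ (Ioi 0)).toReal := mass_pos μ h0
  unfold Ik
  rw [abs_div, abs_of_pos (a := (μ (Ioi 0)).toReal ^ (k+2)) (pow_pos this _), div_le_iff₀ (pow_pos this _)]
  exact h1

lemma Ik_lin (k : ℕ) (μ : Measure ℝ) [IsFiniteMeasure μ] {f g : ℝ → ℝ} (hf : Nice f) (hg : Nice g)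
    (a b : ℝ) : Ik (k+2) μ (fun x => a * f x + b * g x) = a * Ik (k+2) μ f + b * Ik (k+2) μ g := by
  unfold Ik
  have e : ∀ x : Fin (k+2) → ℝ, (a * f (∑ i, x i) + b * g (∑ i, x i) - ∑ i, (a * f (x i) + b * g (x i)))
      = a * (f (∑ i, x i) - ∑ i, f (x i)) + b * (g (∑ i, x i) - ∑ i, g (x i)) := by
    intro x
    rw [Finset.sum_add_distrib, ← Finset.mul_sum, ← Finset.mul_sum]; ring
  simp_rw [e]
  rw [integral_add ((nice_int (k+1) μ hf).const_mul a) ((nice_int (k+1) μ hg).const_mul b),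
    integral_const_mul, integral_const_mul]
  ring

lemma Ik_congr (k : ℕ) (μ : Measure ℝ) [IsFiniteMeasure μ] {f g : ℝ → ℝ} (h : ∀ x, 0 < x → f x = g x) :
    Ik (k+2) μ f = Ik (k+2) μ g := by
  unfold Ik
  congr 1
  refine integral_congr_ae ?_
  filter_upwards [pi_pos (k+2) μ] with x hx
  rw [h _ (Finset.sum_pos (fun i _ => hx i) Finset.univ_nonempty)]
  congr 1
  exact Finset.sum_congr rfl fun i _ => h _ (hx i)

lemma Ik_one (k : ℕ) (μ : Measure ℝ) [IsFiniteMeasure μ] (h0 : μ (Ioi 0) ≠ 0) :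
    Ik k μ (fun _ => 1) = 1 - k := by
  have := mass_pos μ h0
  unfold Ik
  rw [integral_const, pi_mass]
  change (mass μ ^ k) • _ / mass μ ^ k = _
  simp
  field_simp

lemma exp_le_one' {q x : ℝ} (hq : 0 < q) (hx : 0 < x) : Real.exp (-(q*x)) ≤ 1 :=
  Real.exp_le_one_iff.2 (by nlinarith)

lemma nice_exp {q : ℝ} (hq : 0 < q) : Nice (fun x => 1 - Real.exp (-(q*x))) := by
  refine ⟨by fun_prop, 1, fun x hx => ?_⟩
  have := exp_le_one' hq hx
  have := Real.exp_pos (-(q*x))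
  rw [abs_le]; constructor <;> linarith

lemma nice_one : Nice (fun _ => 1) := ⟨continuous_const, 1, by simp⟩

lemma nice_lin {f g : ℝ → ℝ} (hf : Nice f) (hg : Nice g) (a b : ℝ) :
    Nice (fun x => a * f x + b * g x) := by
  obtain ⟨hf, M, hM⟩ := hf
  obtain ⟨hg, N, hN⟩ := hg
  refine ⟨by fun_prop, |a| * M + |b| * N, fun x hx => ?_⟩
  refine (abs_add_le _ _).trans ?_
  rw [abs_mul, abs_mul]
  gcongr
  exacts [hM x hx, hN x hx]

lemma nice_int1 (μ : Measure ℝ) [IsFiniteMeasure μ] {f : ℝ → ℝ} (hf : Nice f) :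
    Integrable f (μ.restrict (Ioi 0)) := by
  obtain ⟨hc, M, hM⟩ := hf
  refine Integrable.of_bound hc.aestronglyMeasurable M ?_
  filter_upwards [ae_restrict_mem measurableSet_Ioi] with x hx
  exact hM x hx

lemma int_one (μ : Measure ℝ) : ∫ _x in Ioi (0:ℝ), (1:ℝ) ∂μ = mass μ := by
  simp [mass, Measure.real]

lemma nice_exp' {q : ℝ} (hq : 0 < q) : Nice (fun x => Real.exp (-(q*x))) := by
  refine ⟨by fun_prop, 1, fun x hx => ?_⟩
  rw [abs_of_pos (Real.exp_pos _)]
  exact exp_le_one' hq hx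

lemma int_exp (μ : Measure ℝ) [IsFiniteMeasure μ] {q : ℝ} (hq : 0 < q) :
    ∫ x in Ioi (0:ℝ), Real.exp (-(q*x)) ∂μ = mass μ - phi μ q := by
  unfold phi
  rw [integral_sub (nice_int1 μ nice_one) (nice_int1 μ (nice_exp' hq)), int_one]
  ring

lemma int_eval (k : ℕ) (μ : Measure ℝ) [IsFiniteMeasure μ] (f : ℝ → ℝ) (i : Fin (k+1)) :
    ∫ x : Fin (k+1) → ℝ, f (x i) ∂(Measure.pi fun _ : Fin (k+1) => μ.restrict (Ioi 0))
      = (∫ x in Ioi (0:ℝ), f x ∂μ) * mass μ ^ k := by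
  have h := integral_fintype_prod_eq_prod (ι := Fin (k+1)) (𝕜 := ℝ) (E := fun _ => ℝ)
    (fun j y => if j = i then f y else 1) (μ := fun _ : Fin (k+1) => μ.restrict (Ioi 0))
  simp only [Finset.prod_ite_eq', Finset.mem_univ, if_true] at h
  rw [h, Fintype.prod_eq_mul_prod_compl i]
  simp only [if_true]
  congr 1
  rw [Finset.prod_congr rfl (g := fun _ => mass μ)]
  · simp [Finset.card_compl]
  · intro j hj
    have : j ≠ i := by simpa using hj
    simp [this, mass, Measure.real]

lemma Ik_exp (k : ℕ) (μ : Measure ℝ) [IsFiniteMeasure μ] (h0 : μ (Ioi 0) ≠ 0) {q : ℝ} (hq : 0 < q) :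
    Ik (k+2) μ (fun x => 1 - Real.exp (-(q*x))) =
      1 - (1 - phi μ q / mass μ)^(k+2) - ((k+2 : ℕ):ℝ) * (phi μ q / mass μ) := by
  have hm := mass_pos μ h0
  have hi2 : ∀ i ∈ (Finset.univ : Finset (Fin (k+2))), Integrable (fun x : Fin (k+2) → ℝ => 1 - Real.exp (-(q * x i)))
      (Measure.pi fun _ : Fin (k+2) => μ.restrict (Ioi 0)) := by
    intro i _
    refine Integrable.of_bound (by fun_prop : Continuous _).aestronglyMeasurable 1 ?_
    filter_upwards [pi_pos (k+2) μ] with x hx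
    have := exp_le_one' hq (hx i)
    have := Real.exp_pos (-(q*x i))
    rw [Real.norm_eq_abs, abs_le]; constructor <;> linarith
  have hi1 : Integrable (fun x : Fin (k+2) → ℝ => Real.exp (-(q * ∑ i, x i)))
      (Measure.pi fun _ : Fin (k+2) => μ.restrict (Ioi 0)) := by
    refine Integrable.of_bound (by fun_prop : Continuous _).aestronglyMeasurable 1 ?_
    filter_upwards [pi_pos (k+2) μ] with x hx
    rw [Real.norm_eq_abs, abs_of_pos (Real.exp_pos _)]
    exact exp_le_one' hq (Finset.sum_pos (fun i _ => hx i) Finset.univ_nonempty)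
  have e : ∫ x : Fin (k+2) → ℝ, Real.exp (-(q * ∑ i, x i)) ∂(Measure.pi fun _ : Fin (k+2) => μ.restrict (Ioi 0))
      = (mass μ - phi μ q)^(k+2) := by
    rw [← int_exp μ hq]
    have h := integral_fintype_prod_eq_pow (ι := Fin (k+2)) (𝕜 := ℝ)
      (fun y : ℝ => Real.exp (-(q*y))) (μ := μ.restrict (Ioi 0))
    rw [Fintype.card_fin] at h
    rw [← h]
    congr 1
    ext x
    rw [← Real.exp_sum, Finset.mul_sum, Finset.sum_neg_distrib]
  have hc : Integrable (fun x : Fin (k+2) → ℝ => (1:ℝ))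
      (Measure.pi fun _ : Fin (k+2) => μ.restrict (Ioi 0)) := integrable_const _
  have hc1 : Integrable (fun x : Fin (k+2) → ℝ => 1 - Real.exp (-(q * ∑ i, x i)))
      (Measure.pi fun _ : Fin (k+2) => μ.restrict (Ioi 0)) := hc.sub hi1
  unfold Ik
  beta_reduce
  rw [integral_sub hc1 (integrable_finsetSum _ hi2), integral_sub hc hi1,
    integral_finsetSum _ hi2, e]
  simp_rw [int_eval (k+1) μ (fun y => 1 - Real.exp (-(q * y)))]
  rw [integral_const, pi_mass]
  change _ / mass μ ^ (k+2) = _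
  have e3 : (1 - phi μ q / mass μ)^(k+2) = (mass μ - phi μ q)^(k+2) / mass μ ^(k+2) := by
    rw [← div_pow]; congr 1; field_simp
  rw [e3]
  simp only [Finset.sum_const, Finset.card_univ, Fintype.card_fin, nsmul_eq_mul, smul_eq_mul, mul_one]
  change (_ - _ - _ * (phi μ q * _)) / _ = _
  field_simp
  try ring

lemma Lform_eq (Ψ : ℝ → ℝ) (μ : Measure ℝ) (f : ℝ → ℝ) :
    Lform Ψ μ f = ∑' k : ℕ, ak Ψ (mass μ) k * Ik (k+2) μ f := rfl

section
variable {Ψ : ℝ → ℝ} {β : ℝ} {π : Measure ℝ}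

lemma term_bound (h : BM Ψ β π) (μ : Measure ℝ) [IsFiniteMeasure μ] (h0 : μ (Ioi 0) ≠ 0)
    {f : ℝ → ℝ} {M : ℝ} (hM : ∀ x : ℝ, 0 < x → |f x| ≤ M) (k : ℕ) :
    ‖ak Ψ (mass μ) k * Ik (k+2) μ f‖ ≤ ak Ψ (mass μ) k * ((k:ℝ)+2) * (2*M) := by
  have ha := ak_nonneg h (mass_pos μ h0) k
  have hM0 : 0 ≤ M := (abs_nonneg _).trans (hM 1 one_pos)
  rw [norm_mul, Real.norm_eq_abs, Real.norm_eq_abs, abs_of_nonneg ha, mul_assoc]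
  refine mul_le_mul_of_nonneg_left ((Ik_bound k μ h0 hM).trans ?_) ha
  have : (0:ℝ) ≤ k := by positivity
  nlinarith

lemma L_summable (h : BM Ψ β π) (μ : Measure ℝ) [IsFiniteMeasure μ] (h0 : μ (Ioi 0) ≠ 0)
    {f : ℝ → ℝ} (hf : Nice f) : Summable fun k : ℕ => ak Ψ (mass μ) k * Ik (k+2) μ f := by
  obtain ⟨hc, M, hM⟩ := hf
  exact Summable.of_norm_bounded ((ak_sum h (mass_pos μ h0)).summable.mul_right (2*M))
    (term_bound h μ h0 hM)

lemma L_bound (h : BM Ψ β π) (μ : Measure ℝ) [IsFiniteMeasure μ] (h0 : μ (Ioi 0) ≠ 0)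
    {f : ℝ → ℝ} {M : ℝ} (hM : ∀ x : ℝ, 0 < x → |f x| ≤ M) :
    |Lform Ψ μ f| ≤ Bm β π (mass μ) * (2*M) := by
  rw [Lform_eq]
  exact tsum_of_norm_bounded ((ak_sum h (mass_pos μ h0)).mul_right (2*M)) (term_bound h μ h0 hM)

lemma L_lin (h : BM Ψ β π) (μ : Measure ℝ) [IsFiniteMeasure μ] (h0 : μ (Ioi 0) ≠ 0)
    {f g : ℝ → ℝ} (hf : Nice f) (hg : Nice g) (a b : ℝ) :
    Lform Ψ μ (fun x => a * f x + b * g x) = a * Lform Ψ μ f + b * Lform Ψ μ g := by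
  rw [Lform_eq, Lform_eq, Lform_eq, ← tsum_mul_left, ← tsum_mul_left,
    ← ((L_summable h μ h0 hf).mul_left a).tsum_add ((L_summable h μ h0 hg).mul_left b)]
  congr 1
  ext k
  rw [Ik_lin k μ hf hg]; ring

lemma L_congr (Ψ : ℝ → ℝ) (μ : Measure ℝ) [IsFiniteMeasure μ] {f g : ℝ → ℝ} (h : ∀ x, 0 < x → f x = g x) :
    Lform Ψ μ f = Lform Ψ μ g := by
  rw [Lform_eq, Lform_eq]
  congr 1; ext k; rw [Ik_congr k μ h]

lemma phi_le (μ : Measure ℝ) [IsFiniteMeasure μ] {q : ℝ} (hq : 0 < q) : phi μ q ≤ mass μ := by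
  rw [← int_one]
  refine setIntegral_mono_on (nice_int1 μ (nice_exp hq)) (nice_int1 μ nice_one) measurableSet_Ioi ?_
  intro x _
  linarith [Real.exp_pos (-(q*x))]

lemma phi_pos (μ : Measure ℝ) [IsFiniteMeasure μ] (h0 : μ (Ioi 0) ≠ 0) {q : ℝ} (hq : 0 < q) :
    0 < phi μ q := by
  have hlt : ∀ x : ℝ, 0 < x → 0 < 1 - Real.exp (-(q*x)) := by
    intro x hx
    have : Real.exp (-(q*x)) < 1 := Real.exp_lt_one_iff.2 (by nlinarith)
    linarith
  unfold phi
  rw [setIntegral_pos_iff_support_of_nonneg_ae]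
  · refine lt_of_lt_of_le (pos_iff_ne_zero.2 h0) (measure_mono fun x hx => ⟨?_, hx⟩)
    exact (hlt x hx).ne'
  · filter_upwards [ae_restrict_mem measurableSet_Ioi] with x hx
    exact (hlt x hx).le
  · exact nice_int1 μ (nice_exp hq)

lemma L_exp (h : BM Ψ β π) (μ : Measure ℝ) [IsFiniteMeasure μ] (h0 : μ (Ioi 0) ≠ 0) {q : ℝ} (hq : 0 < q) :
    Lform Ψ μ (fun x => 1 - Real.exp (-(q*x))) = - Ψ (phi μ q) := by
  rw [Lform_eq]
  simp_rw [Ik_exp _ μ h0 hq]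
  exact (ak_c_sum h (mass_pos μ h0) (phi_pos μ h0 hq) (phi_le μ hq)).tsum_eq

lemma L_one (h : BM Ψ β π) (μ : Measure ℝ) [IsFiniteMeasure μ] (h0 : μ (Ioi 0) ≠ 0) :
    Lform Ψ μ (fun _ => 1) = - Ψ (mass μ) := by
  rw [Lform_eq]
  simp_rw [Ik_one _ μ h0]
  have hm := mass_pos μ h0
  have := (ak_c_sum h hm hm le_rfl).tsum_eq
  rw [div_self hm.ne'] at this
  simpa using this

lemma phi_tendsto (μ : Measure ℝ) [IsFiniteMeasure μ] :
    Tendsto (fun n : ℕ => phi μ ((n:ℝ)+1)) atTop (nhds (mass μ)) := by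
  rw [← int_one]
  unfold phi
  refine tendsto_integral_of_dominated_convergence (fun _ => 1)
    (fun n => (by fun_prop : Continuous _).aestronglyMeasurable) (integrable_const _) ?_ ?_
  · intro n
    filter_upwards [ae_restrict_mem measurableSet_Ioi] with x hx
    have := exp_le_one' (by positivity : (0:ℝ) < (n:ℝ)+1) hx
    have := Real.exp_pos (-(((n:ℝ)+1)*x))
    rw [Real.norm_eq_abs, abs_le]; constructor <;> linarith
  · filter_upwards [ae_restrict_mem measurableSet_Ioi] with x hx
    have hx' : 0 < x := hx
    have h1 : Tendsto (fun n : ℕ => ((n:ℝ)+1)*x) atTop atTop :=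
      (tendsto_atTop_add_const_right _ 1 tendsto_natCast_atTop_atTop).atTop_mul_const hx'
    have := (Real.tendsto_exp_neg_atTop_nhds_zero.comp h1).const_sub 1
    simpa using this
end
section
variable {Ψ : ℝ → ℝ} {β : ℝ} {π : Measure ℝ} {ν : ℝ → Measure ℝ}

lemma uIcc_pos {s t τ : ℝ} (hs : 0 < s) (ht : 0 < t) (h : τ ∈ uIcc s t) : 0 < τ :=
  lt_of_lt_of_le (lt_min hs ht) h.1

lemma Psi_comp_int (h : BM Ψ β π) {g : ℝ → ℝ} (hg : ∀ t, 0 < t → 0 < g t)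
    (ha : AntitoneOn g (Ioi 0)) {s t : ℝ} (hs : 0 < s) (ht : 0 < t) :
    IntervalIntegrable (fun τ => Ψ (g τ)) volume s t := by
  refine AntitoneOn.intervalIntegrable ?_
  intro x hx y hy hxy
  have hx0 := uIcc_pos hs ht hx
  have hy0 := uIcc_pos hs ht hy
  exact Psi_mono h (hg y hy0) (ha hx0 hy0 hxy)

lemma anti_of_eq (h : BM Ψ β π) {g : ℝ → ℝ} (hg : ∀ t, 0 < t → 0 < g t)
    (he : ∀ s t, 0 < s → 0 < t → g t = g s + ∫ τ in s..t, -Ψ (g τ)) : AntitoneOn g (Ioi 0) := by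
  intro s hs t ht hst
  have hs' : 0 < s := hs
  have := he s t hs ht
  rw [intervalIntegral.integral_neg] at this
  have h2 : 0 ≤ ∫ τ in s..t, Ψ (g τ) :=
    intervalIntegral.integral_nonneg hst fun u hu => Psi_nonneg h (hg u (lt_of_lt_of_le hs' hu.1))
  linarith

lemma deriv_of_eq (h : BM Ψ β π) {g : ℝ → ℝ} (hg : ∀ t, 0 < t → 0 < g t)
    (he : ∀ s t, 0 < s → 0 < t → g t = g s + ∫ τ in s..t, -Ψ (g τ)) {t : ℝ} (ht : 0 < t) :
    HasDerivAt g (-Ψ (g t)) t := by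
  have ha := anti_of_eq h hg he
  have hi : ∀ {s t : ℝ}, 0 < s → 0 < t → IntervalIntegrable (fun τ => -Ψ (g τ)) volume s t :=
    fun hs ht => (Psi_comp_int h hg ha hs ht).neg
  have hc : ContinuousOn g (Ioi 0) := by
    intro r hr
    have hr' : 0 < r := hr
    have h1 := intervalIntegral.continuousOn_primitive_interval'
      (hi (half_pos hr') (by linarith : 0 < 2*r)) (left_mem_uIcc)
    rw [uIcc_of_le (by linarith)] at h1
    have h2 : ContinuousAt (fun b => ∫ τ in (r/2)..b, -Ψ (g τ)) r :=
      h1.continuousAt (Icc_mem_nhds (by linarith) (by linarith))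
    have h3 : ContinuousAt (fun b => g (r/2) + ∫ τ in (r/2)..b, -Ψ (g τ)) r :=
      continuousAt_const.add h2
    refine (h3.congr ?_).continuousWithinAt
    filter_upwards [Ioi_mem_nhds hr'] with b hb
    exact (he _ _ (half_pos hr') hb).symm
  have hc2 : ContinuousOn (fun τ => -Ψ (g τ)) (Ioi 0) := by
    intro r hr
    exact ((Psi_deriv h (hg r hr)).continuousAt.comp_continuousWithinAt (hc r hr)).neg
  have h4 := intervalIntegral.integral_hasDerivAt_right (hi (half_pos ht) ht)
    (hc2.stronglyMeasurableAtFilter isOpen_Ioi t ht) (hc2.continuousAt (Ioi_mem_nhds ht))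
  refine (h4.const_add (g (t/2))).congr_of_eventuallyEq ?_
  filter_upwards [Ioi_mem_nhds ht] with b hb
  exact he _ _ (half_pos ht) hb

lemma eq_of_deriv (h : BM Ψ β π) {g : ℝ → ℝ} (hg : ∀ t, 0 < t → 0 < g t)
    (hd : ∀ t, 0 < t → HasDerivAt g (-Ψ (g t)) t) {s t : ℝ} (hs : 0 < s) (ht : 0 < t) :
    g t = g s + ∫ τ in s..t, -Ψ (g τ) := by
  rw [intervalIntegral.integral_eq_sub_of_hasDerivAt (f := g)
    (fun x hx => hd x (uIcc_pos hs ht hx))]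
  · ring
  · refine ContinuousOn.intervalIntegrable ?_
    intro r hr
    have hr' := uIcc_pos hs ht hr
    exact ((Psi_deriv h (hg r hr')).continuousAt.comp
      (hd r hr').continuousAt).neg.continuousWithinAt

lemma test_exp {q : ℝ} (hq : 0 < q) : IsTestFun (fun x => 1 - Real.exp (-(q*x))) := by
  obtain ⟨hc, M, hM⟩ := nice_exp hq
  refine ⟨hc.continuousOn, ⟨M, hM⟩, ⟨_, (hc.tendsto 0).mono_left nhdsWithin_le_nhds⟩, 1, ?_⟩
  have h1 : Tendsto (fun x : ℝ => q * x) atTop atTop := tendsto_id.const_mul_atTop hq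
  simpa using (Real.tendsto_exp_neg_atTop_nhds_zero.comp h1).const_sub 1

/-- good functions -/
def Good (Ψ : ℝ → ℝ) (ν : ℝ → Measure ℝ) (f : ℝ → ℝ) : Prop :=
  Nice f ∧ ∀ s t : ℝ, 0 < s → 0 < t →
    IntervalIntegrable (fun τ => Lform Ψ (ν τ) f) volume s t ∧
    ∫ x in Ioi (0:ℝ), f x ∂(ν t)
      = (∫ x in Ioi (0:ℝ), f x ∂(ν s)) + ∫ τ in s..t, Lform Ψ (ν τ) f

lemma good_lin (h : BM Ψ β π) (hfin : ∀ t : ℝ, 0 < t → IsFiniteMeasure (ν t))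
    (hnz : ∀ t : ℝ, 0 < t → ν t (Ioi 0) ≠ 0) {f g : ℝ → ℝ} (hf : Good Ψ ν f) (hg : Good Ψ ν g)
    (a b : ℝ) : Good Ψ ν (fun x => a * f x + b * g x) := by
  refine ⟨nice_lin hf.1 hg.1 a b, fun s t hs ht => ?_⟩
  obtain ⟨f1, f2⟩ := hf.2 s t hs ht
  obtain ⟨g1, g2⟩ := hg.2 s t hs ht
  have e : EqOn (fun τ => a * Lform Ψ (ν τ) f + b * Lform Ψ (ν τ) g)
      (fun τ => Lform Ψ (ν τ) (fun x => a * f x + b * g x)) (uIcc s t) := by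
    intro τ hτ
    have h0 := uIcc_pos hs ht hτ
    have := hfin τ h0
    exact (L_lin h (ν τ) (hnz τ h0) hf.1 hg.1 a b).symm
  refine ⟨((f1.const_mul a).add (g1.const_mul b)).congr (e.mono uIoc_subset_uIcc), ?_⟩
  rw [← intervalIntegral.integral_congr e, intervalIntegral.integral_add (f1.const_mul a) (g1.const_mul b),
    intervalIntegral.integral_const_mul, intervalIntegral.integral_const_mul]
  have hI : ∀ r, 0 < r → ∫ x in Ioi (0:ℝ), (a * f x + b * g x) ∂(ν r) =
      a * (∫ x in Ioi (0:ℝ), f x ∂(ν r)) + b * ∫ x in Ioi (0:ℝ), g x ∂(ν r) := by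
    intro r hr
    have := hfin r hr
    rw [integral_add ((nice_int1 (ν r) hf.1).const_mul a) ((nice_int1 (ν r) hg.1).const_mul b),
      integral_const_mul, integral_const_mul]
  rw [hI s hs, hI t ht, f2, g2]
  ring

lemma good_of (f : ℝ → ℝ) (hf : Nice f) (g : ℝ → ℝ) (h : BM Ψ β π)
    (hg : ∀ t, 0 < t → 0 < g t)
    (he : ∀ s t, 0 < s → 0 < t → g t = g s + ∫ τ in s..t, -Ψ (g τ))
    (hgf : ∀ t, 0 < t → ∫ x in Ioi (0:ℝ), f x ∂(ν t) = g t)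
    (hL : ∀ t, 0 < t → Lform Ψ (ν t) f = -Ψ (g t)) : Good Ψ ν f := by
  refine ⟨hf, fun s t hs ht => ?_⟩
  have e : EqOn (fun τ => -Ψ (g τ)) (fun τ => Lform Ψ (ν τ) f) (uIcc s t) :=
    fun τ hτ => (hL τ (uIcc_pos hs ht hτ)).symm
  refine ⟨(Psi_comp_int h hg (anti_of_eq h hg he) hs ht).neg.congr (e.mono uIoc_subset_uIcc), ?_⟩
  rw [← intervalIntegral.integral_congr e, hgf t ht, hgf s hs]
  exact he s t hs ht

lemma mass_eq (h : BM Ψ β π) (hfin : ∀ t : ℝ, 0 < t → IsFiniteMeasure (ν t))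
    (hnz : ∀ t : ℝ, 0 < t → ν t (Ioi 0) ≠ 0)
    (he : ∀ q, 0 < q → ∀ s t, 0 < s → 0 < t → phi (ν t) q = phi (ν s) q + ∫ τ in s..t, -Ψ (phi (ν τ) q)) :
    ∀ s t, 0 < s → 0 < t → mass (ν t) = mass (ν s) + ∫ τ in s..t, -Ψ (mass (ν τ)) := by
  intro s t hs ht
  have hp : ∀ q, 0 < q → ∀ t, 0 < t → 0 < phi (ν t) q := fun q hq t ht => by
    have := hfin t ht
    exact phi_pos (ν t) (hnz t ht) hq
  have hq : ∀ n : ℕ, (0:ℝ) < (n:ℝ) + 1 := fun n => by positivity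
  have hlim : ∀ t, 0 < t → Tendsto (fun n : ℕ => phi (ν t) ((n:ℝ)+1)) atTop (nhds (mass (ν t))) :=
    fun t ht => by
      have := hfin t ht
      exact phi_tendsto (ν t)
  have hM : ∀ t, 0 < t → 0 < mass (ν t) := fun t ht => by
    have := hfin t ht
    exact mass_pos (ν t) (hnz t ht)
  have hanti : ∀ n : ℕ, AntitoneOn (fun t => phi (ν t) ((n:ℝ)+1)) (Ioi 0) := fun n =>
    anti_of_eq h (hp _ (hq n)) (he _ (hq n))
  have h1 : Tendsto (fun n : ℕ => ∫ τ in s..t, -Ψ (phi (ν τ) ((n:ℝ)+1))) atTop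
      (nhds (∫ τ in s..t, -Ψ (mass (ν τ)))) := by
    refine intervalIntegral.tendsto_integral_filter_of_dominated_convergence
      (fun _ => Ψ (mass (ν (min s t)))) ?_ ?_ (by simp) ?_
    · refine Eventually.of_forall fun n => ?_
      exact (intervalIntegrable_iff.1 (Psi_comp_int h (hp _ (hq n)) (hanti n) hs ht).neg).aestronglyMeasurable
    · refine Eventually.of_forall fun n => Eventually.of_forall fun τ hτ => ?_
      have hτ' := uIoc_subset_uIcc hτ
      have h0 := uIcc_pos hs ht hτ'
      have hmin := lt_min hs ht
      rw [norm_neg, Real.norm_eq_abs, abs_of_nonneg (Psi_nonneg h (hp _ (hq n) τ h0))]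
      refine Psi_mono h (hp _ (hq n) τ h0) ((hanti n hmin h0 hτ'.1).trans ?_)
      have := hfin _ hmin
      exact phi_le _ (hq n)
    · refine Eventually.of_forall fun τ hτ => ?_
      have h0 := uIcc_pos hs ht (uIoc_subset_uIcc hτ)
      exact ((Psi_deriv h (hM τ h0)).continuousAt.tendsto.comp (hlim τ h0)).neg
  refine tendsto_nhds_unique (hlim t ht) ?_
  refine ((hlim s hs).add h1).congr fun n => ?_
  exact (he _ (hq n) s t hs ht).symm

lemma good_poly (h : BM Ψ β π) (hfin : ∀ t : ℝ, 0 < t → IsFiniteMeasure (ν t))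
    (hnz : ∀ t : ℝ, 0 < t → ν t (Ioi 0) ≠ 0)
    (h1 : Good Ψ ν (fun _ => 1)) (h2 : ∀ q : ℝ, 0 < q → Good Ψ ν (fun x => 1 - Real.exp (-(q*x))))
    (p : Polynomial ℝ) : Good Ψ ν (fun x => p.eval (Real.exp (-x))) := by
  induction p using Polynomial.induction_on' with
  | add p q hp hq =>
    have := good_lin h hfin hnz hp hq 1 1
    simpa using this
  | monomial n a =>
    rcases Nat.eq_zero_or_pos n with rfl | hn
    · have := good_lin h hfin hnz h1 h1 a 0
      simpa using this
    · have := good_lin h hfin hnz h1 (h2 n (by exact_mod_cast hn)) a (-a)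
      convert this using 2 with x
      rw [Polynomial.eval_monomial, ← Real.exp_nat_mul]
      have : (n:ℝ) * -x = -(n*x) := by ring
      rw [this]; ring

/-- compactification -/
def cG (f : ℝ → ℝ) (l₀ l : ℝ) (y : ℝ) : ℝ :=
  if y ≤ 0 then l else if 1 ≤ y then l₀ else f (-Real.log y)

lemma cG_cont {f : ℝ → ℝ} {l₀ l : ℝ} (hf : ContinuousOn f (Ioi 0))
    (h0 : Tendsto f (nhdsWithin 0 (Ioi 0)) (nhds l₀)) (hl : Tendsto f atTop (nhds l)) :
    Continuous (cG f l₀ l) := by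
  rw [continuous_iff_continuousAt]
  intro y
  have hmid : ∀ z, 0 < z → z < 1 → cG f l₀ l z = f (-Real.log z) := by
    intro z hz hz1
    simp [cG, not_le.2 hz, not_le.2 hz1]
  have hlow : ∀ z, z ≤ 0 → cG f l₀ l z = l := fun z hz => by simp [cG, hz]
  have hhigh : ∀ z, 1 ≤ z → cG f l₀ l z = l₀ := fun z hz => by
    have : ¬ z ≤ 0 := by linarith
    simp [cG, this, hz]
  rcases lt_trichotomy y 0 with hy | hy | hy
  · refine (continuousAt_const (y := l)).congr ?_
    filter_upwards [Iio_mem_nhds hy] with z hz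
    exact (hlow z (le_of_lt hz)).symm
  · subst hy
    rw [continuousAt_iff_continuous_left'_right']
    constructor
    · refine (continuousWithinAt_const (b := l)).congr (fun z hz => hlow z (le_of_lt hz)) (hlow 0 le_rfl)
    · unfold ContinuousWithinAt
      rw [hlow 0 le_rfl]
      have h1 : Tendsto (fun z => -Real.log z) (nhdsWithin 0 (Ioi 0)) atTop :=
        tendsto_neg_atBot_atTop.comp Real.tendsto_log_nhdsGT_zero
      refine (hl.comp h1).congr' ?_
      filter_upwards [Ioo_mem_nhdsGT (zero_lt_one (α := ℝ))] with z hz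
      exact (hmid z hz.1 hz.2).symm
  · rcases lt_trichotomy y 1 with hy1 | hy1 | hy1
    · have hlog : -Real.log y ∈ Ioi (0:ℝ) := neg_pos.2 (Real.log_neg hy hy1)
      have h1 : ContinuousAt (fun z => f (-Real.log z)) y :=
        ContinuousAt.comp (f := fun z => -Real.log z) (hf.continuousAt (Ioi_mem_nhds hlog)) (Real.continuousAt_log hy.ne').neg
      refine h1.congr ?_
      filter_upwards [Ioo_mem_nhds hy hy1] with z hz
      exact (hmid z hz.1 hz.2).symm
    · subst hy1
      rw [continuousAt_iff_continuous_left'_right']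
      constructor
      · unfold ContinuousWithinAt
        rw [hhigh 1 le_rfl]
        have h1 : Tendsto (fun z => -Real.log z) (nhdsWithin 1 (Iio 1)) (nhdsWithin 0 (Ioi 0)) := by
          refine tendsto_nhdsWithin_iff.2 ⟨?_, ?_⟩
          · have : ContinuousAt (fun z => -Real.log z) 1 := (Real.continuousAt_log one_ne_zero).neg
            have := this.tendsto
            simp only [Real.log_one, neg_zero] at this
            exact this.mono_left nhdsWithin_le_nhds
          · filter_upwards [Ioo_mem_nhdsLT (zero_lt_one (α := ℝ))] with z hz
            exact neg_pos.2 (Real.log_neg hz.1 hz.2)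
        refine (h0.comp h1).congr' ?_
        filter_upwards [Ioo_mem_nhdsLT (zero_lt_one (α := ℝ))] with z hz
        exact (hmid z hz.1 hz.2).symm
      · refine (continuousWithinAt_const (b := l₀)).congr (fun z hz => hhigh z (le_of_lt hz)) (hhigh 1 le_rfl)
    · refine (continuousAt_const (y := l₀)).congr ?_
      filter_upwards [Ioi_mem_nhds hy1] with z hz
      exact (hhigh z (le_of_lt hz)).symm

lemma weak_of_good (h : BM Ψ β π) (hfin : ∀ t : ℝ, 0 < t → IsFiniteMeasure (ν t))
    (hnz : ∀ t : ℝ, 0 < t → ν t (Ioi 0) ≠ 0) (hanti : AntitoneOn (fun t => mass (ν t)) (Ioi 0))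
    (hp : ∀ p : Polynomial ℝ, Good Ψ ν (fun x => p.eval (Real.exp (-x)))) : IsWeakSolution Ψ ν := by
  intro f hf s t hs ht
  obtain ⟨hc, ⟨M, hM⟩, ⟨l₀, h0⟩, l, hl⟩ := hf
  have hG := cG_cont hc h0 hl
  set F : ℝ → ℝ := fun x => cG f l₀ l (Real.exp (-x)) with hF
  have hFf : ∀ x, 0 < x → f x = F x := by
    intro x hx
    have h1 : Real.exp (-x) < 1 := Real.exp_lt_one_iff.2 (by linarith)
    simp [hF, cG, not_le.2 hx, not_le.2 (Real.exp_pos (-x))]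
  have hFM : ∀ x, 0 < x → |F x| ≤ M := fun x hx => by rw [← hFf x hx]; exact hM x hx
  have hFn : Nice F := ⟨hG.comp (by fun_prop), M, hFM⟩
  have hM0 : 0 ≤ M := (abs_nonneg _).trans (hFM 1 one_pos)
  have hex : ∀ n : ℕ, ∃ p : Polynomial ℝ, ∀ x ∈ Icc (0:ℝ) 1, |p.eval x - cG f l₀ l x| < 1 / ((n:ℝ)+1) :=
    fun n => exists_polynomial_near_of_continuousOn 0 1 _ hG.continuousOn _ (by positivity)
  choose p hpp using hex
  set H : ℕ → ℝ → ℝ := fun n x => (p n).eval (Real.exp (-x)) with hH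
  have hHF : ∀ n x, 0 < x → |1 * H n x + (-1) * F x| ≤ 1 / ((n:ℝ)+1) := by
    intro n x hx
    have h1 : Real.exp (-x) ≤ 1 := Real.exp_le_one_iff.2 (by linarith)
    have := hpp n _ ⟨(Real.exp_pos (-x)).le, h1⟩
    rw [one_mul, neg_one_mul, ← sub_eq_add_neg]
    exact this.le
  have hHM : ∀ n x, 0 < x → |H n x| ≤ M + 1 := by
    intro n x hx
    have h1 := hHF n x hx
    have h2 := hFM x hx
    have h3 : 1 / ((n:ℝ)+1) ≤ 1 := by
      rw [div_le_one (by positivity)]; linarith [(Nat.cast_nonneg n : (0:ℝ) ≤ n)]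
    have h4 : H n x = (1 * H n x + (-1) * F x) + F x := by ring
    rw [h4]
    exact (abs_add_le _ _).trans (by linarith)
  have hzero : Tendsto (fun n : ℕ => 1 / ((n:ℝ)+1)) atTop (nhds 0) := tendsto_one_div_add_atTop_nhds_zero_nat
  -- limits
  have hlimI : ∀ r, 0 < r → Tendsto (fun n => ∫ x in Ioi (0:ℝ), H n x ∂(ν r)) atTop
      (nhds (∫ x in Ioi (0:ℝ), f x ∂(ν r))) := by
    intro r hr
    have := hfin r hr
    refine tendsto_integral_of_dominated_convergence (fun _ => M + 1)
      (fun n => (hp (p n)).1.1.aestronglyMeasurable) (integrable_const _) ?_ ?_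
    · intro n
      filter_upwards [ae_restrict_mem measurableSet_Ioi] with x hx
      exact hHM n x hx
    · filter_upwards [ae_restrict_mem measurableSet_Ioi] with x hx
      rw [hFf x hx, tendsto_iff_norm_sub_tendsto_zero]
      refine squeeze_zero (fun _ => norm_nonneg _) (fun n => ?_) hzero
      have := hHF n x hx
      rwa [one_mul, neg_one_mul, ← sub_eq_add_neg] at this
  have hlimL : ∀ r, 0 < r → Tendsto (fun n => Lform Ψ (ν r) (H n)) atTop
      (nhds (Lform Ψ (ν r) f)) := by
    intro r hr
    have := hfin r hr
    rw [L_congr Ψ (ν r) hFf, tendsto_iff_norm_sub_tendsto_zero]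
    have hz2 : Tendsto (fun n : ℕ => Bm β π (mass (ν r)) * (2 * (1 / ((n:ℝ)+1)))) atTop (nhds 0) := by
      simpa using (hzero.const_mul 2).const_mul (Bm β π (mass (ν r)))
    refine squeeze_zero (fun _ => norm_nonneg _) (fun n => ?_) hz2
    have h1 := L_bound h (ν r) (hnz r hr) (hHF n)
    rw [L_lin h (ν r) (hnz r hr) (hp (p n)).1 hFn] at h1
    rwa [one_mul, neg_one_mul, ← sub_eq_add_neg] at h1
  have hlim2 : Tendsto (fun n => ∫ τ in s..t, Lform Ψ (ν τ) (H n)) atTop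
      (nhds (∫ τ in s..t, Lform Ψ (ν τ) f)) := by
    refine intervalIntegral.tendsto_integral_filter_of_dominated_convergence
      (fun _ => Bm β π (mass (ν (min s t))) * (2 * (M+1))) ?_ ?_ (by simp) ?_
    · exact Eventually.of_forall fun n => (intervalIntegrable_iff.1 ((hp (p n)).2 s t hs ht).1).aestronglyMeasurable
    · refine Eventually.of_forall fun n => Eventually.of_forall fun τ hτ => ?_
      have hτ' := uIoc_subset_uIcc hτ
      have h0 := uIcc_pos hs ht hτ'
      have := hfin τ h0
      refine (L_bound h (ν τ) (hnz τ h0) (hHM n)).trans ?_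
      refine mul_le_mul_of_nonneg_right ?_ (by positivity)
      exact Bm_mono h.1 h.2.1 (mass_pos (ν τ) (hnz τ h0)) (hanti (lt_min hs ht) h0 hτ'.1)
    · exact Eventually.of_forall fun τ hτ => hlimL τ (uIcc_pos hs ht (uIoc_subset_uIcc hτ))
  refine tendsto_nhds_unique (hlimI t ht) (((hlimI s hs).add hlim2).congr fun n => ?_)
  exact (((hp (p n)).2 s t hs ht).2).symm
end

/-- `(ν_t)` is a weak solution of the generalized Smoluchowski
equation iff its Laplace exponent `φ(t,q) = ∫ (1-e^{-qx}) ν_t(dx)` satisfies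
`∂_t φ = -Ψ(φ)`. -/
theorem weak_solution_iff_laplace_ode
    (Ψ : ℝ → ℝ) (β : ℝ) (π : Measure ℝ)
    (hβ : 0 ≤ β)
    (hπfin : ∫⁻ x in Ioi (0:ℝ), ENNReal.ofReal (min x (x ^ 2)) ∂π < ⊤)
    (hΨ : ∀ u : ℝ, 0 < u →
      Ψ u = β * u ^ 2 + ∫ x in Ioi (0:ℝ), (Real.exp (-(u * x)) - 1 + u * x) ∂π)
    (ν : ℝ → Measure ℝ)
    (hfin : ∀ t : ℝ, 0 < t → IsFiniteMeasure (ν t))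
    (hnz : ∀ t : ℝ, 0 < t → ν t (Ioi 0) ≠ 0)
    (hconc : ∀ t : ℝ, 0 < t → ν t (Iic 0) = 0)
    (hmeas : ∀ f : ℝ → ℝ, IsTestFun f →
      Measurable fun t : ℝ => ∫ x in Ioi (0:ℝ), f x ∂(ν t)) :
    IsWeakSolution Ψ ν ↔
      ∀ q : ℝ, 0 < q → ∀ t : ℝ, 0 < t →
        HasDerivAt (fun s : ℝ => ∫ x in Ioi (0:ℝ), (1 - Real.exp (-(q * x))) ∂(ν s))
          (-Ψ (∫ x in Ioi (0:ℝ), (1 - Real.exp (-(q * x))) ∂(ν t))) t := by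
  have h : BM Ψ β π := ⟨hβ, hπfin, hΨ⟩
  have hpos : ∀ q, 0 < q → ∀ t, 0 < t → 0 < phi (ν t) q := fun q hq t ht => by
    have := hfin t ht
    exact phi_pos (ν t) (hnz t ht) hq
  have hL : ∀ q, 0 < q → ∀ t, 0 < t →
      Lform Ψ (ν t) (fun x => 1 - Real.exp (-(q*x))) = -Ψ (phi (ν t) q) := fun q hq t ht => by
    have := hfin t ht
    exact L_exp h (ν t) (hnz t ht) hq
  constructor
  · intro hw q hq t ht
    refine deriv_of_eq h (g := fun s => phi (ν s) q) (hpos q hq) ?_ ht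
    intro s t hs ht
    have := hw _ (test_exp hq) s t hs ht
    rw [intervalIntegral.integral_congr (g := fun τ => -Ψ (phi (ν τ) q))
      (fun τ hτ => hL q hq τ (uIcc_pos hs ht hτ))] at this
    exact this
  · intro hd
    have he : ∀ q, 0 < q → ∀ s t, 0 < s → 0 < t →
        phi (ν t) q = phi (ν s) q + ∫ τ in s..t, -Ψ (phi (ν τ) q) := fun q hq s t hs ht =>
      eq_of_deriv h (g := fun s => phi (ν s) q) (hpos q hq) (hd q hq) hs ht
    have hme := mass_eq h hfin hnz he
    have hmp : ∀ t, 0 < t → 0 < mass (ν t) := fun t ht => by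
      have := hfin t ht
      exact mass_pos (ν t) (hnz t ht)
    have g1 : Good Ψ ν (fun _ => 1) :=
      good_of _ nice_one (fun t => mass (ν t)) h hmp hme (fun t _ => int_one (ν t)) (fun t ht => by
        have := hfin t ht
        exact L_one h (ν t) (hnz t ht))
    have g2 : ∀ q : ℝ, 0 < q → Good Ψ ν (fun x => 1 - Real.exp (-(q*x))) := fun q hq =>
      good_of _ (nice_exp hq) (fun t => phi (ν t) q) h (hpos q hq) (he q hq) (fun t _ => rfl) (hL q hq)
    exact weak_of_good h hfin hnz (anti_of_eq h hmp hme) (good_poly h hfin hnz g1 g2)
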